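/- arXiv:2503.12615 — 4 statements merged into one kernel-verified Lean document; each statement's English description precedes it below -/
import Mathlib

section
/- Let N, s, M be natural numbers with N = s·M and s, M > 0, let π : ZMod N → ZMod M be the reduction homomorphism, let B ⊆ ZMod N be fiber-injective for π, let h_s : ZMod N → ℂ satisfy 𝓕_N h_s (m) = 0 for every m ∉ B, and let σ : ZMod N → ℂ satisfy 𝓕_N σ = s·1_B. For any H : ZMod N → ℂ define the low-resolution kernel h := ↓_s(σ ⋆ H) : ZMod M → ℂ. Then for every X : ZMod N → ℂ, the circular convolution on ZMod M of ↓_s(h_s ⋆ X) with h equals ↓_s(h_s ⋆ (X ⋆ H)); that is, applying alias-free subsampling with anti-aliasing filter h_s to X and then convolving with h gives the same result as subsampling the high-resolution blurred image X ⋆ H. -/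
open ZMod Finset

noncomputable section

/-- Circular convolution on `ZMod N`: `(f ⋆ g)(n) = ∑ m, f m * g (n - m)`. -/
def cconv {N : ℕ} [NeZero N] (f g : ZMod N → ℂ) : ZMod N → ℂ :=
  fun n => ∑ m : ZMod N, f m * g (n - m)

/-- Decimation operator `↓_s : (ZMod N → ℂ) → (ZMod M → ℂ)`, `(↓_s f)(k) = f (s * k.val)`. -/
def decim (N M s : ℕ) (f : ZMod N → ℂ) : ZMod M → ℂ :=
  fun k => f ((s * k.val : ℕ) : ZMod N)

/-- `B` is fiber-injective for `π` if each fiber of `π` contains at most one element of `B`. -/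
def FiberInj {N M : ℕ} (π : ZMod N → ZMod M) (B : Set (ZMod N)) : Prop :=
  ∀ x ∈ B, ∀ y ∈ B, π x = π y → x = y

/-!
On the Fourier side, `↓_s` sums a spectrum over the fibers of `π` and divides by `s` (aliasing).
When two spectra live on a set meeting each fiber at most once, such a sum has at most one nonzero
term, so decimation turns the convolution on `ZMod N` into `s` times the one on `ZMod M`. The filter
`σ` compensates for this, since convolving with it multiplies every signal with spectrum in `B` by
`s`.
-/

variable {N M s : ℕ} [NeZero N] [NeZero M]

lemma dft_cconv (f g : ZMod N → ℂ) : 𝓕 (cconv f g) = 𝓕 f * 𝓕 g := by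
  ext k
  have char_split (j m : ZMod N) :
      stdAddChar (-(j * k)) = stdAddChar (-(m * k)) * stdAddChar (-((j - m) * k)) := by
    rw [← AddChar.map_add_eq_mul]
    ring_nf
  calc 𝓕 (cconv f g) k
    _ = ∑ m, ∑ j, stdAddChar (-(j * k)) * (f m * g (j - m)) := by
      simp only [dft_apply, cconv, smul_eq_mul, mul_sum]
      exact sum_comm
    _ = ∑ m, stdAddChar (-(m * k)) * f m * ∑ j, stdAddChar (-((j - m) * k)) * g (j - m) := by
      simp only [mul_sum]
      refine sum_congr rfl fun m _ ↦ sum_congr rfl fun j _ ↦ ?_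
      rw [char_split j m]
      ring
    _ = ∑ m, stdAddChar (-(m * k)) * f m * 𝓕 g k :=
      sum_congr rfl fun m _ ↦ congrArg _ <|
        (Equiv.subRight m).sum_comp fun j ↦ stdAddChar (-(j * k)) * g j
    _ = (𝓕 f * 𝓕 g) k := by
      simp only [← sum_mul, Pi.mul_apply, dft_apply, smul_eq_mul]

lemma stdAddChar_intCast_mul (hN : N = s * M) (a : ℤ) :
    stdAddChar ((s * a : ℤ) : ZMod N) = stdAddChar (a : ZMod M) := by
  subst hN
  have hs : (s : ℂ) ≠ 0 := Nat.cast_ne_zero.mpr <| left_ne_zero_of_mul <| NeZero.ne (s * M)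
  rw [stdAddChar_coe, stdAddChar_coe]
  push_cast
  rw [mul_left_comm, mul_div_mul_left _ _ hs]

lemma stdAddChar_mul_natCast_val (hN : N = s * M) (π : ZMod N →+* ZMod M)
    (j : ZMod N) (m : ZMod M) :
    stdAddChar (j * ((s * m.val : ℕ) : ZMod N)) = stdAddChar (π j * m) := by
  obtain ⟨a, rfl⟩ := intCast_surjective j
  calc stdAddChar ((a : ZMod N) * ((s * m.val : ℕ) : ZMod N))
    _ = stdAddChar ((s * (a * m.val) : ℤ) : ZMod N) := by
      push_cast
      rw [mul_left_comm]
    _ = stdAddChar ((a * m.val : ℤ) : ZMod M) := stdAddChar_intCast_mul hN _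
    _ = stdAddChar (π a * m) := by
      rw [Int.cast_mul, Int.cast_natCast, natCast_zmod_val, map_intCast]

lemma dft_decim_s0 (hN : N = s * M) (π : ZMod N →+* ZMod M) (f : ZMod N → ℂ) :
    𝓕 (decim N M s f) = fun k ↦ (s : ℂ)⁻¹ * ∑ j with π j = k, 𝓕 f j := by
  rw [← LinearEquiv.eq_symm_apply]
  ext m
  calc decim N M s f m
    _ = 𝓕⁻ (𝓕 f) (s * m.val : ℕ) := by rw [LinearEquiv.symm_apply_apply, decim]
    _ = (N : ℂ)⁻¹ * ∑ j, stdAddChar (π j * m) * 𝓕 f j := by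
      simp only [invDFT_apply, stdAddChar_mul_natCast_val hN π, smul_eq_mul]
    _ = (N : ℂ)⁻¹ * ∑ k, ∑ j with π j = k, stdAddChar (π j * m) * 𝓕 f j := by
      rw [sum_fiberwise]
    _ = (N : ℂ)⁻¹ * ∑ k, stdAddChar (k * m) * ∑ j with π j = k, 𝓕 f j := by
      congr! 2 with k
      rw [mul_sum]
      exact sum_congr rfl fun j hj ↦ by rw [(mem_filter.mp hj).2]
    _ = 𝓕⁻ (fun k ↦ (s : ℂ)⁻¹ * ∑ j with π j = k, 𝓕 f j) m := by
      simp only [invDFT_apply, smul_eq_mul, hN, Nat.cast_mul, mul_inv_rev,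
        mul_left_comm _ (s : ℂ)⁻¹, ← mul_sum, mul_assoc]

lemma sum_mul_sum_eq_sum_mul_of_pairwise {ι R : Type*} [NonUnitalNonAssocSemiring R]
    {t : Finset ι} {f g : ι → R} (h : (t : Set ι).Pairwise fun i j ↦ f i * g j = 0) :
    (∑ i ∈ t, f i) * ∑ j ∈ t, g j = ∑ i ∈ t, f i * g i := by
  rw [sum_mul_sum]
  exact sum_congr rfl fun i hi ↦
    sum_eq_single_of_mem i hi fun j hj hji ↦ h hi hj hji.symm

/-- Signals on `ZMod N` whose spectrum vanishes outside the frequency band `B`: the signals that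
can be decimated without aliasing when `B` is fiber-injective. -/
def IsBandlimited (B : Set (ZMod N)) (f : ZMod N → ℂ) : Prop :=
  ∀ m ∉ B, 𝓕 f m = 0

variable {B : Set (ZMod N)} {f g : ZMod N → ℂ}

lemma IsBandlimited.cconv_right (hf : IsBandlimited B f) (g : ZMod N → ℂ) :
    IsBandlimited B (cconv f g) := fun m hm ↦ by
  rw [dft_cconv, Pi.mul_apply, hf m hm, zero_mul]

lemma IsBandlimited.cconv_eq_smul (hf : IsBandlimited B f) {c : ℂ} (hg : ∀ m ∈ B, 𝓕 g m = c) :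
    cconv f g = c • f := by
  refine dft.injective <| funext fun m ↦ ?_
  rw [dft_cconv, _root_.map_smul, Pi.mul_apply, Pi.smul_apply, smul_eq_mul, mul_comm]
  by_cases hm : m ∈ B
  · rw [hg m hm]
  · rw [hf m hm, mul_zero, mul_zero]

lemma FiberInj.cconv_decim_decim {π : ZMod N →+* ZMod M} (hB : FiberInj π B) (hN : N = s * M)
    (hf : IsBandlimited B f) (hg : IsBandlimited B g) :
    cconv (decim N M s f) (decim N M s g) = (s : ℂ)⁻¹ • decim N M s (cconv f g) := by
  refine dft.injective <| funext fun k ↦ ?_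
  have no_cross_terms :
      (({j | π j = k} : Finset (ZMod N)) : Set (ZMod N)).Pairwise fun i j ↦ 𝓕 f i * 𝓕 g j = 0 := by
    intro i hi j hj hij
    rw [mem_coe, mem_filter_univ] at hi hj
    by_cases hiB : i ∈ B
    · have hjB : j ∉ B := fun hjB ↦ hij <| hB i hiB j hjB (hi.trans hj.symm)
      rw [hg j hjB, mul_zero]
    · rw [hf i hiB, zero_mul]
  simp only [dft_cconv, _root_.map_smul, dft_decim_s0 hN π, Pi.mul_apply, Pi.smul_apply, smul_eq_mul,
    ← sum_mul_sum_eq_sum_mul_of_pairwise no_cross_terms]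
  ring

/-- Alias-free subsampling of `X` followed by convolution with the equivalent low-resolution
kernel `h = ↓_s (σ ⋆ H)` agrees with alias-free subsampling of the blurred image `X ⋆ H`. -/
theorem subsample_conv_eq (N s M : ℕ) [NeZero N] [NeZero M] (hs : 0 < s) (hM : 0 < M) (hN : N = s * M)
    (B : Set (ZMod N))
    (hB : FiberInj (ZMod.castHom (show M ∣ N from ⟨s, by rw [hN]; ring⟩) (ZMod M)) B)
    (h_s : ZMod N → ℂ) (hhs : ∀ m : ZMod N, m ∉ B → 𝓕 h_s m = 0)
    (σ : ZMod N → ℂ)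
    (hσ : ∀ m : ZMod N, 𝓕 σ m = (s : ℂ) * Set.indicator B (1 : ZMod N → ℂ) m)
    (H : ZMod N → ℂ) :
    ∀ X : ZMod N → ℂ,
      cconv (decim N M s (cconv h_s X)) (decim N M s (cconv σ H))
        = decim N M s (cconv h_s (cconv X H)) := by
  intro X
  have hσB : IsBandlimited B σ := fun m hm ↦ by rw [hσ, Set.indicator_of_notMem hm, mul_zero]
  have hσs : ∀ m ∈ B, 𝓕 σ m = s := fun m hm ↦ by
    rw [hσ, Set.indicator_of_mem hm, Pi.one_apply, mul_one]
  have hXH : IsBandlimited B (cconv h_s (cconv X H)) := IsBandlimited.cconv_right hhs _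
  have regroup : cconv (cconv h_s X) (cconv σ H) = cconv (cconv h_s (cconv X H)) σ :=
    dft.injective <| by simp only [dft_cconv]; ring
  calc cconv (decim N M s (cconv h_s X)) (decim N M s (cconv σ H))
    _ = (s : ℂ)⁻¹ • decim N M s (cconv (cconv h_s X) (cconv σ H)) :=
      hB.cconv_decim_decim hN (IsBandlimited.cconv_right hhs X) (hσB.cconv_right H)
    _ = (s : ℂ)⁻¹ • (s : ℂ) • decim N M s (cconv h_s (cconv X H)) := by
      rw [regroup, hXH.cconv_eq_smul hσs]
      rfl
    _ = decim N M s (cconv h_s (cconv X H)) :=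
      inv_smul_smul₀ (Nat.cast_ne_zero.mpr hs.ne') _

end
end

section
/- Let N, s, M be natural numbers with N = s·M and s, M > 0. For every f : ZMod N → ℂ and every k : ZMod M, the discrete Fourier transform of the decimated signal satisfies 𝓕_M(↓_s f)(k) = (1/s) · ∑_{m : ZMod N, π m = k} 𝓕_N f (m); that is, the DFT of the s-fold decimation of f equals 1/s times the periodization P_s of the DFT of f (the aliasing formula). -/
open ZMod Finset

noncomputable section

/-- Periodization operator: `(P_s w)(k) = ∑_{m : π m = k} w m`. -/
def periodize {N M : ℕ} [NeZero N] (π : ZMod N → ZMod M) (w : ZMod N → ℂ) : ZMod M → ℂ :=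
  fun k => ∑ m ∈ Finset.univ.filter (fun m : ZMod N => π m = k), w m

/-! Inverting the DFT turns aliasing into a statement about sampling: at the multiples of `s`, the
frequencies `m` of a signal of length `s * M` enter only through
`exp (2πi · s m / (s M)) = exp (2πi · m / M)`, hence only through their residues modulo `M`, and
collecting residue classes leaves an inverse DFT of length `M`. -/

lemma sum_mul_periodize {N M : ℕ} [NeZero N] [NeZero M] (π : ZMod N → ZMod M)
    (g : ZMod M → ℂ) (w : ZMod N → ℂ) :
    ∑ k, g k * periodize π w k = ∑ m, g (π m) * w m := by
  rw [← sum_fiberwise univ π]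
  refine sum_congr rfl fun k _ ↦ ?_
  rw [periodize, mul_sum]
  refine sum_congr rfl fun m hm ↦ ?_
  rw [(mem_filter.mp hm).2]

section

variable {s M : ℕ} [NeZero s] [NeZero M]

lemma stdAddChar_natCast_mul (m : ZMod (s * M)) :
    stdAddChar ((s : ZMod (s * M)) * m) = stdAddChar (castHom (dvd_mul_left M s) (ZMod M) m) := by
  obtain ⟨a, rfl⟩ := intCast_surjective m
  have hs : (s : ℂ) ≠ 0 := NeZero.ne _
  have h_cast : (s * a : ZMod (s * M)) = ((s * a : ℤ) : ZMod (s * M)) := by simp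
  rw [map_intCast, h_cast, stdAddChar_coe, stdAddChar_coe]
  congr 1
  push_cast
  field_simp

lemma stdAddChar_mul_natCast_mul_val (m : ZMod (s * M)) (j : ZMod M) :
    stdAddChar (m * ((s * j.val : ℕ) : ZMod (s * M))) =
      stdAddChar (castHom (dvd_mul_left M s) (ZMod M) m * j) := by
  have h_comm : m * ((s * j.val : ℕ) : ZMod (s * M)) = s * (m * j.val) := by push_cast; ring
  rw [h_comm, stdAddChar_natCast_mul, map_mul, map_natCast, natCast_zmod_val]

lemma invDFT_periodize (w : ZMod (s * M) → ℂ) :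
    𝓕⁻ (periodize (castHom (dvd_mul_left M s) (ZMod M)) w) =
      (s : ℂ) • decim (s * M) M s (𝓕⁻ w) := by
  ext j
  have hs : (s : ℂ) ≠ 0 := NeZero.ne _
  have h_scale : (M : ℂ)⁻¹ = s * ((s * M : ℕ) : ℂ)⁻¹ := by push_cast; field_simp
  simp only [decim, Pi.smul_apply, invDFT_apply, smul_eq_mul, stdAddChar_mul_natCast_mul_val]
  rw [sum_mul_periodize _ (fun k ↦ stdAddChar (k * j)), h_scale, mul_assoc]

end

/-- Aliasing formula: the DFT of the `s`-fold decimation of `f` is `1/s` times the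
periodization of the DFT of `f`. -/
theorem dft_decim (N s M : ℕ) [NeZero N] [NeZero M] (hs : 0 < s) (hM : 0 < M)
    (hN : N = s * M) (f : ZMod N → ℂ) (k : ZMod M) :
    𝓕 (decim N M s f) k
      = (1 / (s : ℂ)) *
        periodize (ZMod.castHom (show M ∣ N from ⟨s, by rw [hN]; ring⟩) (ZMod M)) (𝓕 f) k := by
  subst hN
  have : NeZero s := ⟨hs.ne'⟩
  have h_periodize : periodize (castHom (dvd_mul_left M s) (ZMod M)) (𝓕 f) =
      (s : ℂ) • 𝓕 (decim (s * M) M s f) := by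
    rw [← LinearEquiv.map_smul, ← LinearEquiv.symm_apply_eq, invDFT_periodize,
      LinearEquiv.symm_apply_apply]
  rw [h_periodize, Pi.smul_apply, smul_eq_mul, one_div, inv_mul_cancel_left₀ (NeZero.ne _)]

end
end

section
/- Let N, s be natural numbers with 0 < s and 2·s ∣ N, let M = N / s, and let π : ZMod N → ZMod M be the reduction homomorphism. Then the centered band B_{s,N} = {j : ZMod N | j.val < N/(2s) ∨ N − N/(2s) ≤ j.val} is a transversal for π: every fiber π⁻¹(k), k : ZMod M, contains exactly one element of B_{s,N}. -/
open ZMod Finset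

noncomputable section

/-- The centered band `B_{s,N} = {j : ZMod N | j.val < N/(2s) ∨ N − N/(2s) ≤ j.val}`. -/
def band (s N : ℕ) : Set (ZMod N) :=
  {j : ZMod N | j.val < N / (2 * s) ∨ N - N / (2 * s) ≤ j.val}

/-!
For `N ≠ 0` the band is the image in `ZMod N` of the integer interval `[-m, m)`, where
`m = N / (2s)`. The composite `ℤ → ZMod N → ZMod M` is again reduction, and the interval consists of
`2m = M` consecutive integers, so it contains one representative of each residue class mod `M`.
For `N = 0` the band is all of `ZMod 0 = ℤ` and the reduction is the identity.
-/

theorem bijOn_intCast_Ico (n : ℕ) [NeZero n] (a : ℤ) :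
    Set.BijOn (Int.cast : ℤ → ZMod n) (Set.Ico a (a + n)) Set.univ := by
  have hn : (0 : ℤ) < n := by exact_mod_cast NeZero.pos n
  refine ⟨Set.mapsTo_univ _ _, fun x hx y hy hxy => ?_, fun k _ => ?_⟩
  · have hdvd : (n : ℤ) ∣ y - x := (ZMod.intCast_eq_intCast_iff_dvd_sub x y n).1 hxy
    have habs : |y - x| < n := by
      rw [abs_lt]
      constructor <;> linarith [hx.1, hx.2, hy.1, hy.2]
    exact (sub_eq_zero.1 (Int.eq_zero_of_abs_lt_dvd hdvd habs)).symm
  · obtain ⟨b, rfl⟩ := ZMod.intCast_surjective k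
    exact ⟨toIcoMod hn a b, toIcoMod_mem_Ico hn a b, by simp [toIcoMod]⟩

theorem bijOn_castHom_image_Ico {M N : ℕ} [NeZero M] (h : M ∣ N) (a : ℤ) :
    Set.BijOn (ZMod.castHom h (ZMod M)) (Int.cast '' Set.Ico a (a + M)) Set.univ := by
  have hcomp : ZMod.castHom h (ZMod M) ∘ (Int.cast : ℤ → ZMod N) = Int.cast :=
    funext fun z => map_intCast _ z
  have hbij : Set.BijOn (ZMod.castHom h (ZMod M) ∘ (Int.cast : ℤ → ZMod N))
      (Set.Ico a (a + M)) Set.univ := hcomp ▸ bijOn_intCast_Ico M a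
  exact (Set.bijOn_comp_iff hbij.injOn.of_comp).1 hbij

theorem val_intCast_of_nonneg_of_lt {N : ℕ} {z : ℤ} (h₀ : 0 ≤ z) (h₁ : z < N) :
    ((z : ZMod N).val : ℤ) = z := by
  have : NeZero N := ⟨by omega⟩
  rw [ZMod.val_intCast, Int.emod_eq_of_lt h₀ h₁]

theorem image_intCast_Ico_neg_self {N m : ℕ} [NeZero N] (hm : m ≤ N) :
    (Int.cast '' Set.Ico (-m : ℤ) m : Set (ZMod N)) = {j | j.val < m ∨ N - m ≤ j.val} := by
  ext j
  constructor
  · rintro ⟨z, ⟨hz₁, hz₂⟩, rfl⟩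
    rcases le_or_gt 0 z with hz | hz
    · have hval : ((z : ZMod N).val : ℤ) = z := val_intCast_of_nonneg_of_lt hz (by omega)
      left
      omega
    · have hval : ((z : ZMod N).val : ℤ) = z + N := by
        simpa using val_intCast_of_nonneg_of_lt (N := N) (z := z + N) (by omega) (by omega)
      right
      omega
  · rintro (hj | hj)
    · exact ⟨j.val, ⟨by omega, by omega⟩, by simp⟩
    · have hlt : j.val < N := ZMod.val_lt j
      exact ⟨j.val - N, ⟨by omega, by omega⟩, by simp⟩

theorem bijOn_castHom_band {M N s : ℕ} (h : M ∣ N) (hM : M = 2 * (N / (2 * s))) :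
    Set.BijOn (ZMod.castHom h (ZMod M)) (band s N) Set.univ := by
  rcases eq_or_ne N 0 with rfl | hN
  · obtain rfl : M = 0 := by simpa using hM
    have hband : band s 0 = Set.univ := by simp [band]
    rw [hband, ZMod.castHom_self, Set.bijOn_univ]
    exact Function.bijective_id
  · have : NeZero N := ⟨hN⟩
    have : NeZero M := ⟨ne_zero_of_dvd_ne_zero hN h⟩
    have hband : band s N = Int.cast '' Set.Ico (-(N / (2 * s) : ℕ) : ℤ) (N / (2 * s) : ℕ) :=
      (image_intCast_Ico_neg_self (Nat.div_le_self N (2 * s))).symm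
    have hend : ((N / (2 * s) : ℕ) : ℤ) = -(N / (2 * s) : ℕ) + M := by omega
    rw [hband]
    nth_rw 2 [hend]
    exact bijOn_castHom_image_Ico h _

/-- The centered band `B_{s,N}` is a transversal for the reduction map
`ZMod N → ZMod (N/s)`: every fiber contains exactly one element of the band. -/
theorem band_isTransversal (N s : ℕ) (hs : 0 < s) (hdvd : 2 * s ∣ N) :
    ∀ k : ZMod (N / s),
      ∃! j : ZMod N, j ∈ band s N ∧
        ZMod.castHom
          (show N / s ∣ N from
            Nat.div_dvd_of_dvd (dvd_trans ⟨2, mul_comm 2 s⟩ hdvd))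
          (ZMod (N / s)) j = k := by
  intro k
  have hM : N / s = 2 * (N / (2 * s)) := by
    obtain ⟨m, rfl⟩ := hdvd
    rw [Nat.mul_div_cancel_left m (by positivity), mul_comm 2 s, mul_assoc,
      Nat.mul_div_cancel_left _ hs]
  have hbij := bijOn_castHom_band
    (Nat.div_dvd_of_dvd ((Dvd.intro_left 2 rfl).trans hdvd)) hM
  obtain ⟨j, hj, rfl⟩ := hbij.surjOn (Set.mem_univ k)
  exact ⟨j, ⟨hj, rfl⟩, fun i ⟨hi, hij⟩ => hbij.injOn hi hj hij⟩

end
end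

section
/- Let N, a, b be natural numbers with 0 < a, 0 < b, and 2·a·b ∣ N. Let β_{b,N} : ZMod (N/b) → ZMod N be the section of the centered band B_{b,N} (a transversal for the reduction ZMod N → ZMod (N/b)), let β_{a,N/b} : ZMod (N/(a·b)) → ZMod (N/b) be the section of the centered band B_{a,N/b}, and let β_{ab,N} : ZMod (N/(a·b)) → ZMod N be the section of the centered band B_{ab,N}. Then the sections compose: for every k : ZMod (N/(a·b)), β_{b,N}(β_{a,N/b}(k)) = β_{ab,N}(k). -/
open ZMod Finset

noncomputable section

/-!
For `N > 0`, the band `B_{s,N}` is the image in `ZMod N` of the integer interval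
`[-N/(2s), N/(2s))`, whose width is at most `N/s`; hence reduction modulo `N/s` is injective on it.
An element of `B_{b,N}` whose reduction modulo `N/b` lies in `B_{a,N/b}` has the same integer
representative in `[-N/(2b), N/(2b))` as its reduction, so `B_{ab,N}` consists of exactly these
elements. Thus `β_b (β_a k)` and `β_{ab} k` are two elements of `B_{ab,N}` over the same `k`.
-/

theorem intCast_injOn_Ico_of_le_add {R : Type*} [AddGroupWithOne R] (n : ℕ) [CharP R n] {x y : ℤ}
    (hxy : y ≤ x + n) : (Set.Ico x y).InjOn (Int.cast : ℤ → R) := by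
  intro u hu v hv huv
  have hdvd : (n : ℤ) ∣ v - u := ((CharP.intCast_eq_intCast R n).mp huv).dvd
  have habs : |v - u| < n := abs_lt.mpr ⟨by linarith [hu.2, hv.1], by linarith [hu.1, hv.2]⟩
  exact (sub_eq_zero.mp (Int.eq_zero_of_abs_lt_dvd hdvd habs)).symm

theorem band_eq_image_intCast_Ico (s N : ℕ) [NeZero N] :
    band s N =
      ((↑) : ℤ → ZMod N) '' Set.Ico (-(N / (2 * s) : ℕ) : ℤ) (N / (2 * s) : ℕ) := by
  have hle : N / (2 * s) ≤ N := Nat.div_le_self N (2 * s)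
  ext j
  constructor
  · have hlt : j.val < N := j.val_lt
    rintro (hj | hj)
    · exact ⟨j.val, ⟨by omega, by omega⟩, by simp⟩
    · exact ⟨j.val - N, ⟨by omega, by omega⟩, by simp⟩
  · rintro ⟨z, ⟨hz, hz'⟩, rfl⟩
    have hval : ((z : ZMod N).val : ℤ) = z % N := ZMod.val_intCast z
    rcases le_or_gt 0 z with hz0 | hz0
    · rw [Int.emod_eq_of_lt hz0 (by omega)] at hval
      exact Or.inl (by omega)
    · rw [← Int.add_emod_right, Int.emod_eq_of_lt (by omega) (by omega)] at hval
      exact Or.inr (by omega)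

theorem two_mul_div_two_mul_le_div (s N : ℕ) : 2 * (N / (2 * s)) ≤ N / s := by
  rw [mul_comm 2 s, ← Nat.div_div_eq_div_mul]
  exact Nat.mul_div_le (N / s) 2

theorem castHom_injOn_band {s N : ℕ} (h : N / s ∣ N) :
    (band s N).InjOn (ZMod.castHom h (ZMod (N / s))) := by
  rcases eq_or_ne N 0 with rfl | hN
  · -- `0 / s` does not reduce to `0`, so `ZMod (0 / s)` and `ZMod 0` must first be identified.
    generalize hM : 0 / s = M at h
    obtain rfl : M = 0 := by rw [← hM, Nat.zero_div]
    exact (ZMod.castHom_injective (ZMod 0)).injOn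
  · have : NeZero N := ⟨hN⟩
    rw [band_eq_image_intCast_Ico]
    rintro _ ⟨x, hx, rfl⟩ _ ⟨y, hy, rfl⟩ hxy
    rw [map_intCast, map_intCast] at hxy
    have hwidth := two_mul_div_two_mul_le_div s N
    rw [intCast_injOn_Ico_of_le_add (N / s) (by omega) hx hy hxy]

theorem band_mul_eq_inter_preimage {a b N : ℕ} (h : N / b ∣ N) :
    band (a * b) N = band b N ∩ ZMod.castHom h (ZMod (N / b)) ⁻¹' band a (N / b) := by
  rcases eq_or_ne N 0 with rfl | hN
  · ext j
    simp [band]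
  have : NeZero N := ⟨hN⟩
  have : NeZero (N / b) := ⟨ne_zero_of_dvd_ne_zero hN h⟩
  have hradius : N / b / (2 * a) = N / (2 * (a * b)) := by
    rw [Nat.div_div_eq_div_mul]
    congr 1
    ring
  have hle : N / (2 * (a * b)) ≤ N / (2 * b) := by
    rw [show 2 * (a * b) = 2 * b * a by ring, ← Nat.div_div_eq_div_mul]
    exact Nat.div_le_self _ a
  have hIco : Set.Ico (-(N / (2 * (a * b)) : ℕ) : ℤ) (N / (2 * (a * b)) : ℕ) ⊆
      Set.Ico (-(N / (2 * b) : ℕ) : ℤ) (N / (2 * b) : ℕ) :=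
    Set.Ico_subset_Ico (by omega) (by omega)
  have hwidth := two_mul_div_two_mul_le_div b N
  simp only [band_eq_image_intCast_Ico, hradius]
  ext j
  constructor
  · rintro ⟨z, hz, rfl⟩
    exact ⟨⟨z, hIco hz, rfl⟩, z, hz, (map_intCast _ z).symm⟩
  · rintro ⟨⟨y, hy, rfl⟩, x, hx, hxy⟩
    rw [map_intCast] at hxy
    obtain rfl : x = y := intCast_injOn_Ico_of_le_add (N / b) (by omega) (hIco hx) hy hxy
    exact ⟨x, hx, rfl⟩

/-- The sections of the centered bands compose:
`β_{b,N} ∘ β_{a,N/b} = β_{ab,N}`. -/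
theorem band_sections_comp (N a b : ℕ) (ha : 0 < a) (hb : 0 < b) (hdvd : 2 * a * b ∣ N)
    (βb : ZMod (N / b) → ZMod N)
    (hβb : ∀ k : ZMod (N / b), βb k ∈ band b N ∧
      ZMod.castHom
        (show N / b ∣ N from Nat.div_dvd_of_dvd (dvd_trans ⟨2 * a, by ring⟩ hdvd))
        (ZMod (N / b)) (βb k) = k)
    (βa : ZMod (N / (a * b)) → ZMod (N / b))
    (hβa : ∀ k : ZMod (N / (a * b)), βa k ∈ band a (N / b) ∧
      ZMod.castHom
        (show N / (a * b) ∣ N / b by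
          have hbN : b ∣ N := dvd_trans ⟨2 * a, by ring⟩ hdvd
          have haNb : a ∣ N / b :=
            (Nat.dvd_div_iff_mul_dvd hbN).mpr (dvd_trans ⟨2, by ring⟩ hdvd)
          have h1 : N / (a * b) = N / b / a := by
            rw [Nat.div_div_eq_div_mul, mul_comm]
          rw [h1]
          exact Nat.div_dvd_of_dvd haNb)
        (ZMod (N / (a * b))) (βa k) = k)
    (βab : ZMod (N / (a * b)) → ZMod N)
    (hβab : ∀ k : ZMod (N / (a * b)), βab k ∈ band (a * b) N ∧
      ZMod.castHom
        (show N / (a * b) ∣ N from Nat.div_dvd_of_dvd (dvd_trans ⟨2, by ring⟩ hdvd))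
        (ZMod (N / (a * b))) (βab k) = k) :
    ∀ k : ZMod (N / (a * b)), βb (βa k) = βab k := by
  intro k
  obtain ⟨hb_mem, hb_cast⟩ := hβb (βa k)
  obtain ⟨ha_mem, ha_cast⟩ := hβa k
  obtain ⟨hab_mem, hab_cast⟩ := hβab k
  have hdvd_b : N / b ∣ N := Nat.div_dvd_of_dvd (dvd_of_mul_left_dvd hdvd)
  have hab : a * b ∣ N := dvd_of_mul_left_dvd (mul_assoc 2 a b ▸ hdvd)
  have hdvd_ab : N / (a * b) ∣ N / b := Nat.div_dvd_div_left hab (Nat.dvd_mul_left b a)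
  have hcomp_mem : βb (βa k) ∈ band (a * b) N := by
    rw [band_mul_eq_inter_preimage hdvd_b]
    exact ⟨hb_mem, by rwa [Set.mem_preimage, hb_cast]⟩
  have hcomp_cast : ZMod.castHom (hdvd_ab.trans hdvd_b) (ZMod (N / (a * b))) (βb (βa k)) = k := by
    rw [← ZMod.castHom_comp hdvd_ab hdvd_b, RingHom.comp_apply, hb_cast, ha_cast]
  exact castHom_injOn_band _ hcomp_mem hab_mem (hcomp_cast.trans hab_cast.symm)

end
end
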